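/- arXiv:2507.18891 — 6 statements merged into one kernel-verified Lean document; each statement's English description precedes it below -/
import Mathlib

section
/- Let G be a finite simple graph on a vertex set V that is bipartite (i.e., G admits a proper 2-coloring). Then the vertex–edge incidence matrix of G, with entries in ℚ (entry (v, e) equal to 1 if vertex v is an endpoint of edge e and 0 otherwise), is totally unimodular: every square submatrix has determinant 0, 1, or −1. -/
open Finset

/-!
Negating the rows on one side of the bipartition turns the incidence matrix into that of a directed
graph, whose columns contain at most one `1` and at most one `-1`. For such a matrix the determinant
of a square submatrix is computed by induction: a column with at most one nonzero entry is expanded,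
and if there is no such column then each column sums to `1 + (-1) = 0`, so the rows are dependent.
-/

section Determinant

variable {R : Type*} [CommRing R]

theorem det_eq_zero_of_forall_col_sum_eq_zero {n : Type*} [Fintype n] [DecidableEq n] [Nonempty n]
    {A : Matrix n n R} (hA : ∀ j, ∑ i, A i j = 0) : A.det = 0 := by
  obtain ⟨p⟩ := ‹Nonempty n›
  have hrows : ∑ i, (1 : R) • A i = 0 := by
    ext j
    simpa only [one_smul, Pi.zero_apply] using (Finset.sum_apply j univ A).trans (hA j)
  calc A.det = (A.updateRow p (∑ i, (1 : R) • A i)).det := by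
        rw [Matrix.det_updateRow_sum A p fun _ => 1, one_smul]
    _ = 0 := Matrix.det_eq_zero_of_row_eq_zero p fun j => by
        rw [hrows, Matrix.updateRow_self, Pi.zero_apply]

theorem det_eq_of_col_eq_zero_of_ne {k : ℕ} {A : Matrix (Fin (k + 1)) (Fin (k + 1)) R}
    {p j : Fin (k + 1)} (hp : ∀ i, i ≠ p → A i j = 0) :
    A.det = (-1) ^ (p + j : ℕ) * A p j * (A.submatrix p.succAbove j.succAbove).det := by
  rw [Matrix.det_succ_column A j, Fintype.sum_eq_single p fun i hi => by
    rw [hp i hi, mul_zero, zero_mul]]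

end Determinant

theorem exists_forall_ne_eq_zero_or_sum_cast_eq_zero {ι R : Type*} [Fintype ι] [Nonempty ι]
    [AddCommGroupWithOne R] {x : ι → SignType} (hx : Set.InjOn x x.support) :
    (∃ p, ∀ i, i ≠ p → x i = 0) ∨ ∑ i, (x i : R) = 0 := by
  by_cases hsingle : ∃ p, ∀ i, i ≠ p → x i = 0
  · exact .inl hsingle
  right
  push Not at hsingle
  obtain ⟨p, -, hp⟩ := hsingle (Classical.arbitrary ι)
  obtain ⟨q, hqp, hq⟩ := hsingle p
  have hopp : x q = -x p := by
    have eq_neg : ∀ a b : SignType, a ≠ 0 → b ≠ 0 → b ≠ a → b = -a := by decide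
    exact eq_neg _ _ hp hq fun h => hqp (hx hq hp h)
  have hzero : ∀ i, i ≠ p ∧ i ≠ q → (x i : R) = 0 := by
    have exhaust : ∀ a b : SignType, a ≠ 0 → b ≠ 0 → b = a ∨ b = -a := by decide
    rintro i ⟨hip, hiq⟩
    suffices x i = 0 by rw [this, SignType.coe_zero]
    by_contra hi
    rcases exhaust _ _ hp hi with h | h
    · exact hip (hx hi hp h)
    · exact hiq (hx hi hq (h.trans hopp.symm))
  calc ∑ i, (x i : R) = x p + x q := Fintype.sum_eq_add p q hqp.symm hzero
    _ = 0 := by rw [hopp, SignType.coe_neg, add_neg_cancel]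

/-- A matrix of signs is an oriented incidence matrix if each column contains at most one `1` and at
most one `-1`, as in the vertex–edge incidence matrix of a directed graph; this is encoded as
injectivity of each column on its support. -/
def IsOrientedIncidence {m n : Type*} (B : Matrix m n SignType) : Prop :=
  ∀ j, Set.InjOn (B.col j) (B.col j).support

namespace IsOrientedIncidence

variable {m n m' n' R : Type*} [CommRing R] {B : Matrix m n SignType}

theorem submatrix (hB : IsOrientedIncidence B) {f : m' → m} (hf : f.Injective) (g : n' → n) :
    IsOrientedIncidence (B.submatrix f g) :=
  fun j _ hi _ hi' h => hf (hB (g j) hi hi' h)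

theorem det_map_cast_mem_range {k : ℕ} {B : Matrix (Fin k) (Fin k) SignType}
    (hB : IsOrientedIncidence B) :
    (B.map (SignType.cast : SignType → R)).det ∈ Set.range (SignType.cast : SignType → R) := by
  induction k with
  | zero => exact ⟨1, by simp⟩
  | succ k ih =>
    by_cases hcol : ∃ j p, ∀ i, i ≠ p → B i j = 0
    · obtain ⟨j, p, hp⟩ := hcol
      obtain ⟨d, hd⟩ := ih (hB.submatrix p.succAbove_right_injective j.succAbove)
      refine ⟨(-1) ^ (p + j : ℕ) * B p j * d, ?_⟩
      have hzero : ∀ i, i ≠ p → B.map (SignType.cast : SignType → R) i j = 0 := fun i hi => by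
        rw [Matrix.map_apply, hp i hi, SignType.coe_zero]
      rw [det_eq_of_col_eq_zero_of_ne hzero, Matrix.submatrix_map, ← hd]
      simp
    · have hsum : ∀ j, ∑ i, B.map (SignType.cast : SignType → R) i j = 0 := fun j =>
        (exists_forall_ne_eq_zero_or_sum_cast_eq_zero (hB j)).resolve_left fun h => hcol ⟨j, h⟩
      exact ⟨0, SignType.coe_zero.trans (det_eq_zero_of_forall_col_sum_eq_zero hsum).symm⟩

theorem isTotallyUnimodular_map_cast (hB : IsOrientedIncidence B) :
    (B.map (SignType.cast : SignType → R)).IsTotallyUnimodular :=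
  fun _ _ g hf _ => (hB.submatrix hf g).det_map_cast_mem_range

end IsOrientedIncidence

theorem isTotallyUnimodular_sign_mul_rows {m n R : Type*} [CommRing R] {A : Matrix m n R}
    (hA : A.IsTotallyUnimodular) (s : m → SignType) :
    (Matrix.of fun i j => (s i : R) * A i j).IsTotallyUnimodular := by
  intro k f g hf hg
  obtain ⟨d, hd⟩ := hA k f g hf hg
  refine ⟨(∏ i, s (f i)) * d, ?_⟩
  calc (((∏ i, s (f i)) * d : SignType) : R)
      = (∏ i, (s (f i) : R)) * (A.submatrix f g).det := by
        rw [SignType.coe_mul, hd]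
        exact congrArg (· * _) (map_prod SignType.castHom (fun i => s (f i)) univ)
    _ = ((Matrix.of fun i j => (s i : R) * A i j).submatrix f g).det :=
        (Matrix.det_mul_column (fun i => (s (f i) : R)) (A.submatrix f g)).symm

theorem range_signType_cast {R : Type*} [Zero R] [One R] [Neg R] :
    Set.range (SignType.cast : SignType → R) = {0, 1, -1} := by
  rw [SignType.range_eq, Set.pair_comm]
  rfl

section IncidenceMatrix

variable {V R : Type*} [DecidableEq V] {G : SimpleGraph V} [DecidableRel G.Adj]

theorem isOrientedIncidence_coloring_mul_incMatrix (C : G.Coloring SignType) :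
    IsOrientedIncidence (Matrix.of fun v e => C v * G.incMatrix SignType v e) := by
  intro e u hu v hv huv
  have mem_of_ne {w : V} (hw : C w * G.incMatrix SignType w e ≠ 0) : e ∈ G.incidenceSet w := by
    by_contra h
    exact hw (by rw [G.incMatrix_of_notMem_incidenceSet h, mul_zero])
  have hu_mem := mem_of_ne hu
  have hv_mem := mem_of_ne hv
  by_contra hne
  refine C.valid (G.adj_of_mem_incidenceSet hne hu_mem hv_mem) ?_
  simpa [G.incMatrix_of_mem_incidenceSet hu_mem, G.incMatrix_of_mem_incidenceSet hv_mem] using huv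

theorem incMatrix_submatrix_edge [Zero R] [One R] [Fintype G.edgeSet] :
    (G.incMatrix R).submatrix id (Subtype.val : {e : Sym2 V // e ∈ G.edgeFinset} → Sym2 V) =
      Matrix.of fun (v : V) (e : {e : Sym2 V // e ∈ G.edgeFinset}) =>
        if v ∈ (e : Sym2 V) then (1 : R) else 0 := by
  ext v ⟨e, he⟩
  simp [SimpleGraph.incMatrix_apply', SimpleGraph.incidenceSet, SimpleGraph.mem_edgeFinset.mp he]

theorem bipartite_incidence_totally_unimodular_general [CommRing R] (hG : G.IsBipartite) :
    (G.incMatrix R).IsTotallyUnimodular := by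
  let C : G.Coloring SignTypeˣ := hG.toColoring (by decide)
  let s : G.Coloring SignType := SimpleGraph.Coloring.mk (fun v => (C v : SignType))
    fun hadj heq => C.valid hadj (Units.ext heq)
  have unit_mul_self : ∀ u : SignTypeˣ, (u : SignType) * u = 1 := by decide
  have hs (v : V) : s v * s v = 1 := unit_mul_self (C v)
  have horiented := isTotallyUnimodular_sign_mul_rows (R := R)
    (isOrientedIncidence_coloring_mul_incMatrix s).isTotallyUnimodular_map_cast s
  convert horiented using 1
  ext v e
  calc G.incMatrix R v e = (G.incMatrix SignType v e : R) := by
        simp only [SimpleGraph.incMatrix_apply']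
        split_ifs <;> simp
    _ = ((s v * (s v * G.incMatrix SignType v e) : SignType) : R) := by
        rw [← mul_assoc, hs, one_mul]
    _ = s v * ((s v * G.incMatrix SignType v e : SignType) : R) := SignType.coe_mul _ _

end IncidenceMatrix

/-- **Total unimodularity of the incidence matrix of a bipartite graph.**
For a finite simple bipartite graph `G`, every square submatrix of the
vertex–edge incidence matrix (over `ℚ`) has determinant `0`, `1`, or `-1`. -/
theorem bipartite_incidence_totally_unimodular
    {V : Type*} [Fintype V] [DecidableEq V]
    (G : SimpleGraph V) [DecidableRel G.Adj]
    (hbip : ∃ c : V → Bool, ∀ u v : V, G.Adj u v → c u ≠ c v)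
    (k : ℕ) (f : Fin k → V) (g : Fin k → {e : Sym2 V // e ∈ G.edgeFinset})
    (hf : Function.Injective f) (hg : Function.Injective g) :
    ((Matrix.of fun (v : V) (e : {e : Sym2 V // e ∈ G.edgeFinset}) =>
        if v ∈ (e : Sym2 V) then (1 : ℚ) else 0).submatrix f g).det
      ∈ ({0, 1, -1} : Set ℚ) := by
  obtain ⟨c, hc⟩ := hbip
  rw [← range_signType_cast, ← incMatrix_submatrix_edge]
  exact (bipartite_incidence_totally_unimodular_general
    (SimpleGraph.Coloring.mk c (hc _ _)).colorable).submatrix id Subtype.val k f g hf hg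
end

section
/- Let G = (V, E) be a finite bipartite graph with nonnegative edge weights w : E → ℝ≥0. Then the optimum of the fractional matching linear program equals the maximum weight of an (integral) matching: the maximum of ∑_{e ∈ E} w(e)·x(e) over all x : E → ℝ satisfying x(e) ≥ 0 for all e ∈ E and ∑_{e ∈ E, v ∈ e} x(e) ≤ 1 for every vertex v ∈ V, is equal to the maximum of ∑_{e ∈ M} w(e) over all matchings M of G. -/
/-!
Complete a fractional matching `x` to a symmetric doubly stochastic matrix by writing the slack of
each vertex on the diagonal. By Birkhoff's theorem this matrix is a convex combination of
permutation matrices. Reading the entry of each edge `s(u, v)` only at `(u, v)`, with `u` on the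
`false` side, recovers `x` on the edges, linearly, and turns a permutation `σ` into the set of edges
`s(u, σ u)` with `u` on the `false` side, which is a matching. Hence `x` is a convex combination of
matchings, and a linear objective is at least as large at one of them as at `x`.
-/

open Finset

section Matching

variable {V : Type*}

/-- A set of edges is a matching if no vertex lies on two distinct edges of it. -/
def IsMatching (M : Finset (Sym2 V)) : Prop :=
  ∀ e ∈ M, ∀ f ∈ M, e ≠ f → ∀ v : V, v ∈ e → v ∉ f

lemma isMatching_empty : IsMatching (∅ : Finset (Sym2 V)) := by
  simp [IsMatching]

lemma exists_isMatching_forall_sum_le {R : Type*} [AddCommMonoid R] [LinearOrder R]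
    (E : Finset (Sym2 V)) (w : Sym2 V → R) :
    ∃ M ⊆ E, IsMatching M ∧ ∀ N ⊆ E, IsMatching N → ∑ e ∈ N, w e ≤ ∑ e ∈ M, w e := by
  classical
  obtain ⟨M, hM, hmax⟩ := exists_max_image (E.powerset.filter IsMatching)
    (fun M => ∑ e ∈ M, w e) ⟨∅, by simp [isMatching_empty]⟩
  simp only [mem_filter, mem_powerset] at hM hmax
  exact ⟨M, hM.1, hM.2, fun N hNE hN => hmax N ⟨hNE, hN⟩⟩

variable [DecidableEq V] {R : Type*} [Semiring R]

/-- The characteristic vector of a set of edges, used to view matchings as points of the fractional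
matching polytope. -/
def charVector (R : Type*) [Zero R] [One R] (M : Finset (Sym2 V)) : Sym2 V → R :=
  fun e => if e ∈ M then 1 else 0

lemma sum_mul_charVector {M E : Finset (Sym2 V)} (hME : M ⊆ E) (w : Sym2 V → R) :
    ∑ e ∈ E, w e * charVector R M e = ∑ e ∈ M, w e := by
  simp [charVector, inter_eq_right.2 hME]

/-- Feasibility for the fractional matching linear program of the edge set `E`. The values of `x`
outside `E` are unconstrained. -/
structure IsFractionalMatching [PartialOrder R] (E : Finset (Sym2 V)) (x : Sym2 V → R) : Prop where
  nonneg : ∀ e ∈ E, 0 ≤ x e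
  sum_le_one : ∀ v : V, ∑ e ∈ E.filter (fun e => v ∈ e), x e ≤ 1

lemma IsMatching.isFractionalMatching_charVector [PartialOrder R] [IsOrderedRing R]
    {M : Finset (Sym2 V)} (hM : IsMatching M) (E : Finset (Sym2 V)) :
    IsFractionalMatching E (charVector R M) where
  nonneg e _ := by
    unfold charVector
    split_ifs
    exacts [zero_le_one, le_rfl]
  sum_le_one v := by
    have card_le : #{e ∈ E.filter (fun e => v ∈ e) | e ∈ M} ≤ 1 := by
      refine card_le_one.2 fun e he f hf => ?_
      simp only [mem_filter] at he hf
      by_contra hne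
      exact hM e he.2 f hf.2 hne v he.1.2 hf.1.2
    simp only [charVector, sum_boole]
    exact mod_cast Nat.mono_cast (α := R) card_le

end Matching

section SlackMatrix

variable {V R : Type*} [DecidableEq V]

lemma sum_incident_eq_sum_neighbors [Fintype V] [AddCommMonoid R] (E : Finset (Sym2 V))
    (x : Sym2 V → R) (u : V) :
    ∑ e ∈ E.filter (fun e => u ∈ e), x e = ∑ v, if s(u, v) ∈ E then x s(u, v) else 0 := by
  have incident_eq_image :
      E.filter (fun e => u ∈ e) = (univ.filter fun v => s(u, v) ∈ E).image fun v => s(u, v) := by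
    ext e
    simp only [mem_filter, mem_image, mem_univ, true_and]
    constructor
    · rintro ⟨he, v, rfl⟩
      exact ⟨v, he, rfl⟩
    · rintro ⟨v, he, rfl⟩
      exact ⟨he, Sym2.mem_mk_left u v⟩
  rw [incident_eq_image, sum_image fun v _ v' _ => Sym2.congr_right.1, sum_filter]

variable [Ring R]

/-- The weighted adjacency matrix of `x` on the edge set `E`, with the slack of each vertex
constraint added on the diagonal so that all row and column sums are `1`. -/
def slackMatrix (E : Finset (Sym2 V)) (x : Sym2 V → R) : Matrix V V R :=
  Matrix.diagonal (fun v => 1 - ∑ e ∈ E.filter (fun e => v ∈ e), x e) +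
    Matrix.of fun u v => if s(u, v) ∈ E then x s(u, v) else 0

lemma slackMatrix_isSymm (E : Finset (Sym2 V)) (x : Sym2 V → R) : (slackMatrix E x).IsSymm := by
  refine (Matrix.isSymm_diagonal _).add (Matrix.IsSymm.ext fun u v => ?_)
  simp only [Matrix.of_apply, Sym2.eq_swap]

lemma sum_slackMatrix [Fintype V] (E : Finset (Sym2 V)) (x : Sym2 V → R) (u : V) :
    ∑ v, slackMatrix E x u v = 1 := by
  simp [slackMatrix, sum_add_distrib, ← sum_incident_eq_sum_neighbors, Matrix.diagonal_apply]

lemma IsFractionalMatching.slackMatrix_mem_doublyStochastic [Fintype V] [PartialOrder R]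
    [IsOrderedRing R] {E : Finset (Sym2 V)} {x : Sym2 V → R} (hx : IsFractionalMatching E x) :
    slackMatrix E x ∈ doublyStochastic R V := by
  have nonneg (u v : V) : 0 ≤ slackMatrix E x u v := by
    refine add_nonneg ?_ ?_
    · rw [Matrix.diagonal_apply]
      split_ifs
      exacts [sub_nonneg.2 (hx.sum_le_one u), le_rfl]
    · rw [Matrix.of_apply]
      split_ifs with he
      exacts [hx.nonneg _ he, le_rfl]
  refine mem_doublyStochastic_iff_sum.2 ⟨nonneg, sum_slackMatrix E x, fun v => ?_⟩
  simpa only [(slackMatrix_isSymm E x).apply] using sum_slackMatrix E x v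

end SlackMatrix

section Bipartite

variable {V R : Type*} {E : Finset (Sym2 V)} {c : V → Bool}

/-- The two-colouring `c` of the vertices exhibits the graph with edge set `E` as bipartite. -/
def IsBipartition (E : Finset (Sym2 V)) (c : V → Bool) : Prop :=
  ∀ e ∈ E, ∀ u v : V, e = s(u, v) → c u ≠ c v

lemma IsBipartition.exists_eq_mk_of_mem (hc : IsBipartition E c) {e : Sym2 V} (he : e ∈ E) :
    ∃ u v, e = s(u, v) ∧ c u = false ∧ c v = true := by
  obtain ⟨u, v⟩ := e
  have huv := hc _ he u v rfl
  cases hu : c u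
  · exact ⟨u, v, rfl, hu, by simpa [hu] using huv.symm⟩
  · exact ⟨v, u, Sym2.eq_swap, by simpa [hu] using huv.symm, hu⟩

variable [DecidableEq V]

/-- The vector on edges whose value at an edge of `E` joining `u` on the `false` side to `v` on the
`true` side is the matrix entry `A u v`, extended by zero outside `E`. Summing over both
orientations makes the formula symmetric, as `Sym2.lift` requires. -/
def orientedEntries [Semiring R] (E : Finset (Sym2 V)) (c : V → Bool) :
    Matrix V V R →ₗ[R] Sym2 V → R where
  toFun A e := if e ∈ E then Sym2.lift ⟨fun u v =>
    (if c u then 0 else A u v) + (if c v then 0 else A v u), fun _ _ => add_comm _ _⟩ e else 0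
  map_add' A B := by
    ext ⟨u, v⟩
    simp only [Sym2.lift_mk, Pi.add_apply, Matrix.add_apply]
    split_ifs <;> abel
  map_smul' r A := by
    ext ⟨u, v⟩
    simp [mul_add]

lemma orientedEntries_of_notMem [Semiring R] (A : Matrix V V R) {e : Sym2 V} (he : e ∉ E) :
    orientedEntries E c A e = 0 :=
  if_neg he

lemma orientedEntries_mk [Semiring R] (A : Matrix V V R) {u v : V} (he : s(u, v) ∈ E)
    (hu : c u = false) (hv : c v = true) : orientedEntries E c A s(u, v) = A u v := by
  simp [orientedEntries, he, hu, hv]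

lemma orientedEntries_slackMatrix [Ring R] (hc : IsBipartition E c) (x : Sym2 V → R)
    {e : Sym2 V} (he : e ∈ E) : orientedEntries E c (slackMatrix E x) e = x e := by
  obtain ⟨u, v, rfl, hu, hv⟩ := hc.exists_eq_mk_of_mem he
  have huv : u ≠ v := fun h => hc _ he u v rfl (congrArg c h)
  simp [orientedEntries_mk _ he hu hv, slackMatrix, huv, he]

section Permutations

variable [Fintype V]

/-- The matching formed by the edges `s(u, σ u)` of `E` with `u` on the `false` side. -/
def permMatching (E : Finset (Sym2 V)) (c : V → Bool) (σ : Equiv.Perm V) : Finset (Sym2 V) :=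
  E.filter fun e => ∃ u, c u = false ∧ e = s(u, σ u)

lemma permMatching_subset (σ : Equiv.Perm V) : permMatching E c σ ⊆ E :=
  filter_subset _ _

lemma mk_mem_permMatching {σ : Equiv.Perm V} {u v : V} (hu : c u = false) (hv : c v = true) :
    s(u, v) ∈ permMatching E c σ ↔ s(u, v) ∈ E ∧ σ u = v := by
  rw [permMatching, mem_filter]
  refine and_congr_right fun _ => ⟨?_, fun h => ⟨u, hu, by rw [h]⟩⟩
  rintro ⟨u', hu', h⟩
  rcases Sym2.eq_iff.1 h with ⟨rfl, rfl⟩ | ⟨-, rfl⟩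
  · rfl
  · simp [hv] at hu'

lemma isMatching_permMatching (hc : IsBipartition E c) (σ : Equiv.Perm V) :
    IsMatching (permMatching E c σ) := by
  intro e he f hf hne x hxe hxf
  obtain ⟨u, v, rfl, hu, hv⟩ := hc.exists_eq_mk_of_mem (permMatching_subset σ he)
  obtain ⟨u', v', rfl, hu', hv'⟩ := hc.exists_eq_mk_of_mem (permMatching_subset σ hf)
  obtain ⟨-, rfl⟩ := (mk_mem_permMatching hu hv).1 he
  obtain ⟨-, rfl⟩ := (mk_mem_permMatching hu' hv').1 hf
  refine hne ?_
  suffices u = u' by rw [this]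
  rcases Sym2.mem_iff.1 hxe with rfl | rfl <;> rcases Sym2.mem_iff.1 hxf with h | h
  · exact h
  · simp [h, hv'] at hu
  · simp [h, hu'] at hv
  · exact σ.injective h

lemma orientedEntries_permMatrix [Semiring R] (hc : IsBipartition E c) (σ : Equiv.Perm V) :
    orientedEntries E c (σ.permMatrix R) = charVector R (permMatching E c σ) := by
  ext e
  by_cases he : e ∈ E
  · obtain ⟨u, v, rfl, hu, hv⟩ := hc.exists_eq_mk_of_mem he
    simp [orientedEntries_mk _ he hu hv, charVector, mk_mem_permMatching hu hv, he,
      Equiv.Perm.permMatrix, PEquiv.toMatrix_apply, Equiv.toPEquiv_apply]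
  · rw [orientedEntries_of_notMem _ he, charVector, if_neg (mt (permMatching_subset σ ·) he)]

end Permutations

variable [Field R] [LinearOrder R] [IsStrictOrderedRing R]

lemma orientedEntries_mem_convexHull_charVector [Fintype V] (hc : IsBipartition E c)
    {A : Matrix V V R} (hA : A ∈ doublyStochastic R V) :
    orientedEntries E c A ∈ convexHull R (charVector R '' {M | M ⊆ E ∧ IsMatching M}) := by
  rw [← SetLike.mem_coe, doublyStochastic_eq_convexHull_permMatrix] at hA
  have hmem := Set.mem_image_of_mem (orientedEntries E c) hA
  rw [LinearMap.image_convexHull] at hmem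
  refine convexHull_mono ?_ hmem
  rintro _ ⟨_, ⟨σ, rfl⟩, rfl⟩
  exact ⟨permMatching E c σ, ⟨permMatching_subset σ, isMatching_permMatching hc σ⟩,
    (orientedEntries_permMatrix hc σ).symm⟩

lemma IsFractionalMatching.exists_mem_convexHull_charVector [Finite V] (hc : IsBipartition E c)
    {x : Sym2 V → R} (hx : IsFractionalMatching E x) :
    ∃ y ∈ convexHull R (charVector R '' {M | M ⊆ E ∧ IsMatching M}), ∀ e ∈ E, y e = x e := by
  cases nonempty_fintype V
  exact ⟨orientedEntries E c (slackMatrix E x),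
    orientedEntries_mem_convexHull_charVector hc hx.slackMatrix_mem_doublyStochastic,
    fun _ he => orientedEntries_slackMatrix hc x he⟩

lemma IsFractionalMatching.exists_isMatching_sum_le [Finite V] (hc : IsBipartition E c)
    {x : Sym2 V → R} (hx : IsFractionalMatching E x) (w : Sym2 V → R) :
    ∃ M ⊆ E, IsMatching M ∧ ∑ e ∈ E, w e * x e ≤ ∑ e ∈ M, w e := by
  obtain ⟨y, hy, hyx⟩ := hx.exists_mem_convexHull_charVector hc
  let weight : (Sym2 V → R) →ₗ[R] R := ∑ e ∈ E, w e • LinearMap.proj e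
  have weight_apply (z : Sym2 V → R) : weight z = ∑ e ∈ E, w e * z e := by simp [weight]
  obtain ⟨_, ⟨M, ⟨hME, hM⟩, rfl⟩, hle⟩ :=
    (weight.convexOn (convex_convexHull R _)).exists_ge_of_mem_convexHull
      (subset_convexHull R _) hy
  refine ⟨M, hME, hM, ?_⟩
  calc ∑ e ∈ E, w e * x e = weight y := by
        rw [weight_apply]
        exact sum_congr rfl fun e he => by rw [hyx e he]
    _ ≤ weight (charVector R M) := hle
    _ = ∑ e ∈ M, w e := by rw [weight_apply, sum_mul_charVector hME]

end Bipartite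

theorem fractional_matching_lp_eq_matching_general
    {V R : Type*} [Finite V] [DecidableEq V] [Field R] [LinearOrder R] [IsStrictOrderedRing R]
    (E : Finset (Sym2 V)) (w : Sym2 V → R) (hbip : ∃ c : V → Bool, IsBipartition E c) :
    ∃ m : R,
      IsGreatest {t : R | ∃ x : Sym2 V → R,
        (∀ e ∈ E, 0 ≤ x e) ∧
        (∀ v : V, ∑ e ∈ E.filter (fun e => v ∈ e), x e ≤ 1) ∧
        t = ∑ e ∈ E, w e * x e} m ∧
      IsGreatest {t : R | ∃ M : Finset (Sym2 V), M ⊆ E ∧ IsMatching M ∧ t = ∑ e ∈ M, w e} m := by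
  obtain ⟨c, hc⟩ := hbip
  obtain ⟨M, hME, hM, hmax⟩ := exists_isMatching_forall_sum_le E w
  have hx := hM.isFractionalMatching_charVector (R := R) E
  refine ⟨∑ e ∈ M, w e, ⟨⟨charVector R M, hx.nonneg, hx.sum_le_one,
    (sum_mul_charVector hME w).symm⟩, ?_⟩, ⟨M, hME, hM, rfl⟩, ?_⟩
  · rintro _ ⟨x, hx₀, hx₁, rfl⟩
    obtain ⟨N, hNE, hN, hle⟩ :=
      IsFractionalMatching.exists_isMatching_sum_le hc ⟨hx₀, hx₁⟩ w
    exact hle.trans (hmax N hNE hN)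
  · rintro _ ⟨N, hNE, hN, rfl⟩
    exact hmax N hNE hN

/-- **Integrality of the fractional matching LP on bipartite graphs.**
For a finite bipartite graph with nonnegative edge weights, the optimum value of the
fractional matching linear program equals the maximum weight of an integral matching. -/
theorem fractional_matching_lp_eq_matching
    {V : Type*} [Fintype V] [DecidableEq V]
    (E : Finset (Sym2 V)) (w : Sym2 V → ℝ)
    (hbip : ∃ c : V → Bool, ∀ e ∈ E, ∀ u v : V, e = s(u, v) → c u ≠ c v)
    (hw : ∀ e ∈ E, 0 ≤ w e) :
    sSup {t : ℝ | ∃ x : Sym2 V → ℝ,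
        (∀ e ∈ E, 0 ≤ x e) ∧
        (∀ v : V, ∑ e ∈ E.filter (fun e => v ∈ e), x e ≤ 1) ∧
        t = ∑ e ∈ E, w e * x e}
      = sSup {t : ℝ | ∃ M : Finset (Sym2 V), M ⊆ E ∧
          (∀ e ∈ M, ∀ f ∈ M, e ≠ f → ∀ x : V, x ∈ e → x ∉ f) ∧
          t = ∑ e ∈ M, w e} := by
  obtain ⟨m, hfrac, hint⟩ := fractional_matching_lp_eq_matching_general E w hbip
  exact hfrac.csSup_eq.trans hint.csSup_eq.symm
end

section
/- Let G = (V, E) be a finite graph with nonnegative edge weights w : E → ℝ≥0, and let M be a matching of G with the domination property: for every edge e ∈ E, either e ∈ M or there exists an edge f ∈ M sharing a vertex with e such that w(f) ≥ w(e). Then M is a 1/2-approximate maximum weight matching: for every matching M' of G, 2·∑_{e ∈ M} w(e) ≥ ∑_{e ∈ M'} w(e). (In particular, the matchings produced by the heaviest-edge-first greedy algorithm and by the locally dominant edge algorithm, which both satisfy the domination property, have weight at least half the maximum weight of a matching.) -/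
open Finset

/-!
Charge every edge of the competing matching to an edge of `M` that dominates it. The edges charged
to a given `f ∈ M` are pairwise disjoint and each contains an endpoint of `f`, so `f` is charged at
most twice, each time by at most its own weight.
-/

section Charging

variable {ι κ R : Type*} [DecidableEq κ] [AddCommMonoid R] [PartialOrder R] [IsOrderedAddMonoid R]

theorem sum_le_nsmul_sum_of_card_fiber_le {s : Finset ι} {t : Finset κ} {a : ι → R} {b : κ → R}
    {g : ι → κ} {k : ℕ} (hg : ∀ i ∈ s, g i ∈ t) (hk : ∀ j ∈ t, #{i ∈ s | g i = j} ≤ k)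
    (hab : ∀ i ∈ s, a i ≤ b (g i)) (hb : ∀ j ∈ t, 0 ≤ b j) :
    ∑ i ∈ s, a i ≤ k • ∑ j ∈ t, b j :=
  calc ∑ i ∈ s, a i ≤ ∑ i ∈ s, b (g i) := sum_le_sum hab
    _ = ∑ j ∈ t, #{i ∈ s | g i = j} • b j := by
      simp only [← sum_fiberwise_of_maps_to' hg b, sum_const]
    _ ≤ ∑ j ∈ t, k • b j := sum_le_sum fun j hj ↦ nsmul_le_nsmul_left (hb j hj) (hk j hj)
    _ = k • ∑ j ∈ t, b j := sum_nsmul t k b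

end Charging

section Hypergraph

variable {ι V : Type*} {v : ι → Finset V}

theorem card_le_card_of_pairwiseDisjoint_of_not_disjoint {s : Finset ι} {t : Finset V}
    (hs : (s : Set ι).PairwiseDisjoint v) (ht : ∀ i ∈ s, ¬Disjoint (v i) t) : #s ≤ #t := by
  refine card_le_card_of_forall_subsingleton (fun i x ↦ x ∈ v i) (fun i hi ↦ ?_) ?_
  · obtain ⟨x, hxi, hxt⟩ := not_disjoint_iff.mp (ht i hi)
    exact ⟨x, hxt, hxi⟩
  · rintro x - i ⟨hi, hxi⟩ j ⟨hj, hxj⟩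
    exact hs.elim_finset hi hj x hxi hxj

theorem sum_le_nsmul_sum_of_pairwiseDisjoint_of_dominating {R : Type*} [AddCommMonoid R]
    [PartialOrder R] [IsOrderedAddMonoid R] {w : ι → R} {M M' : Finset ι} {k : ℕ}
    (hw : ∀ f ∈ M, 0 ≤ w f) (hk : ∀ f ∈ M, #(v f) ≤ k)
    (hM' : (M' : Set ι).PairwiseDisjoint v)
    (hdom : ∀ e ∈ M', ∃ f ∈ M, ¬Disjoint (v e) (v f) ∧ w e ≤ w f) :
    ∑ e ∈ M', w e ≤ k • ∑ f ∈ M, w f := by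
  classical
  choose! g hgM hmeet hle using hdom
  refine sum_le_nsmul_sum_of_card_fiber_le hgM (fun f hf ↦ ?_) hle hw
  have hfiber_disjoint : (({e ∈ M' | g e = f} : Finset ι) : Set ι).PairwiseDisjoint v :=
    hM'.subset (coe_subset.mpr (filter_subset _ _))
  have hfiber_meet : ∀ e ∈ ({e ∈ M' | g e = f} : Finset ι), ¬Disjoint (v e) (v f) := by
    intro e he
    obtain ⟨heM', rfl⟩ := mem_filter.mp he
    exact hmeet e heM'
  calc #{e ∈ M' | g e = f} ≤ #(v f) :=
        card_le_card_of_pairwiseDisjoint_of_not_disjoint hfiber_disjoint hfiber_meet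
    _ ≤ k := hk f hf

end Hypergraph

section Graph

variable {V : Type*}

theorem sym2_card_toFinset_le_two [DecidableEq V] (e : Sym2 V) : #e.toFinset ≤ 2 := by
  rw [Sym2.card_toFinset]
  split_ifs <;> decide

theorem sym2_not_disjoint_toFinset_iff [DecidableEq V] {e f : Sym2 V} :
    ¬Disjoint e.toFinset f.toFinset ↔ ∃ x, x ∈ e ∧ x ∈ f := by
  simp only [not_disjoint_iff, Sym2.mem_toFinset]

theorem dominating_matching_half_approx_general {R : Type*} [AddCommMonoid R] [PartialOrder R]
    [IsOrderedAddMonoid R] {w : Sym2 V → R} {M M' : Finset (Sym2 V)} (hw : ∀ f ∈ M, 0 ≤ w f)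
    (hM' : ∀ e ∈ M', ∀ f ∈ M', e ≠ f → ∀ x : V, x ∈ e → x ∉ f)
    (hdom : ∀ e ∈ M', e ∈ M ∨ ∃ f ∈ M, (∃ x : V, x ∈ e ∧ x ∈ f) ∧ w e ≤ w f) :
    ∑ e ∈ M', w e ≤ 2 • ∑ e ∈ M, w e := by
  classical
  refine sum_le_nsmul_sum_of_pairwiseDisjoint_of_dominating (v := Sym2.toFinset) hw
    (fun f _ ↦ sym2_card_toFinset_le_two f) (fun e he f hf hef ↦ ?_) (fun e he ↦ ?_)
  · simpa only [Function.onFun, disjoint_left, Sym2.mem_toFinset] using hM' e he f hf hef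
  · simp only [sym2_not_disjoint_toFinset_iff]
    rcases hdom e he with heM | hdominated
    · exact ⟨e, heM, ⟨_, e.out_fst_mem, e.out_fst_mem⟩, le_rfl⟩
    · exact hdominated

end Graph

/-- **Dominating matchings are 1/2-approximate.**
If every edge of the graph is either in the matching `M` or shares a vertex with an
edge of `M` of at least its weight, then `M` has at least half the weight of every
matching (in particular of a maximum weight matching). -/
theorem dominating_matching_half_approx
    {V : Type*} [Fintype V] [DecidableEq V]
    (E : Finset (Sym2 V)) (w : Sym2 V → ℝ)
    (hw : ∀ e ∈ E, 0 ≤ w e)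
    (M : Finset (Sym2 V)) (hME : M ⊆ E)
    (hmatch : ∀ e ∈ M, ∀ f ∈ M, e ≠ f → ∀ x : V, x ∈ e → x ∉ f)
    (hdom : ∀ e ∈ E, e ∈ M ∨ ∃ f ∈ M, (∃ x : V, x ∈ e ∧ x ∈ f) ∧ w e ≤ w f) :
    ∀ M' : Finset (Sym2 V), M' ⊆ E →
      (∀ e ∈ M', ∀ f ∈ M', e ≠ f → ∀ x : V, x ∈ e → x ∉ f) →
      ∑ e ∈ M', w e ≤ 2 * ∑ e ∈ M, w e := by
  intro M' hM'E hM'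
  simpa only [nsmul_eq_mul, Nat.cast_ofNat] using dominating_matching_half_approx_general
    (fun f hf ↦ hw f (hME hf)) hM' (fun e he ↦ hdom e (hM'E he))
end

section
/- Let R and S be disjoint finite vertex sets with edge weights w : R × S → ℝ satisfying 0 ≤ w(r,s) ≤ 1 for all r, s. Then every matching M between R and S has weight ∑_{(r,s) ∈ M} w(r,s) ≤ min(|R|, |S|). Consequently, the fuzzy similarity sim_φ(R,S) = W/(|R|+|S|−W), where W is the maximum matching weight, satisfies sim_φ(R,S) ≤ min(|R|,|S|) / max(|R|,|S|); hence if sim_φ(R,S) ≥ δ for some δ ∈ (0,1], then δ·|R| ≤ |S| ≤ |R|/δ (the size filter used in candidate generation). -/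
open Finset

/-- `M` is a matching between `R` and `S` in the complete bipartite graph, encoded by its finite set
of edges: distinct edges differ in both coordinates. The vertex types `α` and `β` may coincide, and
`R` and `S` are then allowed to overlap, an edge being an ordered pair. -/
structure IsMatching_s9 {α β : Type*} (R : Finset α) (S : Finset β) (M : Finset (α × β)) : Prop where
  subset_product : M ⊆ R ×ˢ S
  ne_and_ne : ∀ p ∈ M, ∀ q ∈ M, p ≠ q → p.1 ≠ q.1 ∧ p.2 ≠ q.2

namespace IsMatching_s9

variable {α β : Type*} {R : Finset α} {S : Finset β} {M : Finset (α × β)}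

theorem injOn_fst (hM : IsMatching_s9 R S M) : Set.InjOn Prod.fst (M : Set (α × β)) :=
  fun p hp q hq => not_imp_not.mp fun hpq => (hM.ne_and_ne p hp q hq hpq).1

theorem injOn_snd (hM : IsMatching_s9 R S M) : Set.InjOn Prod.snd (M : Set (α × β)) :=
  fun p hp q hq => not_imp_not.mp fun hpq => (hM.ne_and_ne p hp q hq hpq).2

theorem card_le_min (hM : IsMatching_s9 R S M) : #M ≤ min #R #S :=
  le_min
    (card_le_card_of_injOn Prod.fst (fun _ hp => (mem_product.mp (hM.subset_product hp)).1)
      hM.injOn_fst)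
    (card_le_card_of_injOn Prod.snd (fun _ hp => (mem_product.mp (hM.subset_product hp)).2)
      hM.injOn_snd)

theorem sum_le_min_card {K : Type*} [Semiring K] [LinearOrder K] [IsOrderedRing K]
    {w : α → β → K} (hM : IsMatching_s9 R S M) (hw : ∀ r ∈ R, ∀ s ∈ S, w r s ≤ 1) :
    ∑ p ∈ M, w p.1 p.2 ≤ min (#R : K) (#S : K) := by
  have hedge : ∀ p ∈ M, w p.1 p.2 ≤ 1 := fun p hp =>
    have hp := mem_product.mp (hM.subset_product hp)
    hw p.1 hp.1 p.2 hp.2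
  calc ∑ p ∈ M, w p.1 p.2 ≤ #M • (1 : K) := sum_le_card_nsmul M _ 1 hedge
    _ = (#M : K) := nsmul_one _
    _ ≤ min (#R : K) (#S : K) :=
        (Nat.mono_cast hM.card_le_min).trans_eq Nat.mono_cast.map_min

end IsMatching_s9

section OrderedField

variable {K : Type*} [Field K] [LinearOrder K] [IsStrictOrderedRing K] {a b x δ : K}

theorem div_add_sub_le_min_div_max (ha : 0 ≤ a) (hb : 0 ≤ b) (hx : x ≤ min a b) :
    x / (a + b - x) ≤ min a b / max a b := by
  have hden : max a b ≤ a + b - x := by linarith [min_add_max a b]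
  rcases (le_max_of_le_left ha : 0 ≤ max a b).eq_or_lt with hmax | hmax
  · -- Here `a = b = 0`, and the right-hand side is `0 / 0 = 0`.
    have hx0 : x ≤ 0 := hx.trans (min_le_max.trans hmax.ge)
    rw [← hmax, div_zero]
    exact div_nonpos_of_nonpos_of_nonneg hx0 (hmax.le.trans hden)
  · exact div_le_div₀ (le_min ha hb) hx hmax hden

theorem mul_le_and_le_div_of_le_min_div_max (ha : 0 ≤ a) (hb : 0 ≤ b) (hδ : 0 < δ)
    (h : δ ≤ min a b / max a b) : δ * a ≤ b ∧ b ≤ a / δ := by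
  have hmul : δ * max a b ≤ min a b :=
    mul_le_of_le_div₀ (le_min ha hb) (le_max_of_le_left ha) h
  rw [le_div_iff₀' hδ]
  constructor
  · calc δ * a ≤ δ * max a b := by gcongr; exact le_max_left a b
      _ ≤ b := hmul.trans (min_le_right a b)
  · calc δ * b ≤ δ * max a b := by gcongr; exact le_max_right a b
      _ ≤ a := hmul.trans (min_le_left a b)

end OrderedField

theorem size_filter_bounds_general {K α β : Type*} [Field K] [LinearOrder K]
    [IsStrictOrderedRing K] {R : Finset α} {S : Finset β} {w : α → β → K}
    (hw : ∀ r ∈ R, ∀ s ∈ S, w r s ≤ 1) {M : Finset (α × β)} (hM : IsMatching_s9 R S M) {W : K}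
    (hW : W = ∑ p ∈ M, w p.1 p.2) :
    W ≤ min (#R : K) (#S : K) ∧
    W / (#R + #S - W) ≤ min (#R : K) (#S : K) / max (#R : K) (#S : K) ∧
    ∀ δ : K, 0 < δ → δ ≤ W / (#R + #S - W) → δ * #R ≤ #S ∧ (#S : K) ≤ #R / δ := by
  have hR : (0 : K) ≤ #R := Nat.cast_nonneg _
  have hS : (0 : K) ≤ #S := Nat.cast_nonneg _
  have hweight : W ≤ min (#R : K) (#S : K) := hW.trans_le (hM.sum_le_min_card hw)
  have hsim := div_add_sub_le_min_div_max hR hS hweight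
  exact ⟨hweight, hsim, fun δ hδ hle =>
    mul_le_and_le_div_of_le_min_div_max hR hS hδ (hle.trans hsim)⟩

/-- **Size bound on matching weight and the size filter.**
With weights in `[0,1]` on the complete bipartite graph on disjoint parts `R`, `S`:
every matching has weight at most `min |R| |S|`; consequently, if `W` is the maximum
matching weight, `sim_φ(R,S) = W/(|R|+|S|-W)` is at most `min(|R|,|S|)/max(|R|,|S|)`,
and `sim_φ(R,S) ≥ δ` with `δ ∈ (0,1]` forces `δ|R| ≤ |S| ≤ |R|/δ`. -/
theorem size_filter_bounds
    {α : Type*} [DecidableEq α]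
    (R S : Finset α) (hdisj : Disjoint R S)
    (w : α → α → ℝ) (hw : ∀ r ∈ R, ∀ s ∈ S, 0 ≤ w r s ∧ w r s ≤ 1)
    (W : ℝ)
    (hW : IsGreatest {t : ℝ | ∃ M : Finset (α × α), M ⊆ R ×ˢ S ∧
        (∀ p ∈ M, ∀ q ∈ M, p ≠ q → p.1 ≠ q.1 ∧ p.2 ≠ q.2) ∧
        t = ∑ p ∈ M, w p.1 p.2} W) :
    (∀ M : Finset (α × α), M ⊆ R ×ˢ S →
        (∀ p ∈ M, ∀ q ∈ M, p ≠ q → p.1 ≠ q.1 ∧ p.2 ≠ q.2) →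
        ∑ p ∈ M, w p.1 p.2 ≤ min (R.card : ℝ) (S.card : ℝ)) ∧
    W / ((R.card : ℝ) + (S.card : ℝ) - W)
        ≤ min (R.card : ℝ) (S.card : ℝ) / max (R.card : ℝ) (S.card : ℝ) ∧
    (∀ δ : ℝ, 0 < δ → δ ≤ 1 →
        δ ≤ W / ((R.card : ℝ) + (S.card : ℝ) - W) →
        δ * (R.card : ℝ) ≤ (S.card : ℝ) ∧ (S.card : ℝ) ≤ (R.card : ℝ) / δ) := by
  have bounds {M t} (hM : M ⊆ R ×ˢ S) hne :=
    size_filter_bounds_general (W := t) (fun r hr s hs => (hw r hr s hs).2) ⟨hM, hne⟩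
  obtain ⟨M, hM, hne, hMW⟩ := hW.1
  obtain ⟨-, hsim, hfilter⟩ := bounds hM hne hMW
  exact ⟨fun M hM hne => (bounds hM hne rfl).1, hsim, fun δ hδ _ => hfilter δ hδ⟩
end

section
/- For finite sets A, B, C (over any type with decidable equality), the Jaccard distance d(A,B) = 1 − |A ∩ B| / |A ∪ B| (with the convention d(A,B) = 0 when both sets are empty) satisfies the triangle inequality: d(A,C) ≤ d(A,B) + d(B,C). Equivalently, the complement of the Jaccard similarity JAC(A,B) = |A ∩ B|/|A ∪ B| is a distance function on finite sets. -/
open Finset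

/-- The Jaccard distance `1 - |A ∩ B| / |A ∪ B|` between finite sets, with the
convention that the distance is `0` when both sets are empty. -/
noncomputable def jaccardDist {α : Type*} [DecidableEq α] (A B : Finset α) : ℝ :=
  if A = ∅ ∧ B = ∅ then 0
  else 1 - ((A ∩ B).card : ℝ) / ((A ∪ B).card : ℝ)

/-!
Membership in `A`, `B`, `C` cannot be constant at a point of `A ∪ B ∪ C` outside `A ∩ C`, so such a
point lies in `A ∆ B` or in `B ∆ C`. Over the common denominator `|A ∪ B ∪ C|` this is the triangle
inequality: adjoining the points of `B \ (A ∪ C)` to both `A ∆ C` and `A ∪ C` can only increase the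
fraction `d(A, C)`, while enlarging the denominators of `d(A, B)` and `d(B, C)` can only decrease
these.
-/

open scoped symmDiff

theorem sup_sdiff_inf_le_symmDiff_sup_symmDiff {β : Type*} [GeneralizedBooleanAlgebra β]
    (a b c : β) : (a ⊔ b ⊔ c) \ (a ⊓ c) ≤ a ∆ b ⊔ b ∆ c := by
  have h_ba : b \ a ≤ a ∆ b ⊔ b ∆ c := le_sup_of_le_left le_sup_right
  have h_bc : b \ c ≤ a ∆ b ⊔ b ∆ c := le_sup_of_le_right le_sup_left
  have h_ca : c \ a ≤ a ∆ b ⊔ b ∆ c := le_sup_right.trans (symmDiff_triangle a b c)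
  have h_ac : a \ c ≤ a ∆ b ⊔ b ∆ c := le_sup_left.trans (symmDiff_triangle a b c)
  simp only [sdiff_inf, sup_sdiff, sdiff_self, bot_sup_eq, sup_bot_eq, sup_le_iff]
  exact ⟨⟨h_ba, h_ca⟩, h_ac, h_bc⟩

section JaccardDist

variable {α : Type*} [DecidableEq α] {A B U : Finset α}

theorem jaccardDist_of_union_nonempty (h : (A ∪ B).Nonempty) :
    jaccardDist A B = 1 - #(A ∩ B) / #(A ∪ B) :=
  if_neg fun h_empty => h.ne_empty (union_eq_empty.mpr h_empty)

theorem jaccardDist_eq_card_symmDiff_div (A B : Finset α) :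
    jaccardDist A B = #(A ∆ B) / #(A ∪ B) := by
  obtain h | h := (A ∪ B).eq_empty_or_nonempty
  · obtain ⟨rfl, rfl⟩ := union_eq_empty.mp h
    simp [jaccardDist]
  · have h_union : (#(A ∪ B) : ℝ) ≠ 0 := by exact_mod_cast h.card_ne_zero
    have h_symmDiff : (#(A ∆ B) : ℝ) = #(A ∪ B) - #(A ∩ B) := by
      rw [symmDiff_eq_sup_sdiff_inf, sup_eq_union, inf_eq_inter,
        cast_card_sdiff inter_subset_union]
    rw [jaccardDist_of_union_nonempty h, h_symmDiff, sub_div, div_self h_union]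

theorem card_symmDiff_div_le_jaccardDist (hU : A ∪ B ⊆ U) :
    (#(A ∆ B) / #U : ℝ) ≤ jaccardDist A B := by
  rw [jaccardDist_eq_card_symmDiff_div]
  obtain h | h := (A ∪ B).eq_empty_or_nonempty
  · obtain ⟨rfl, rfl⟩ := union_eq_empty.mp h
    simp
  · have : 0 < #(A ∪ B) := h.card_pos
    gcongr

theorem jaccardDist_le_card_sdiff_inter_div (hU : A ∪ B ⊆ U) :
    jaccardDist A B ≤ #(U \ (A ∩ B)) / #U := by
  obtain h | h := (A ∪ B).eq_empty_or_nonempty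
  · rw [jaccardDist, if_pos (union_eq_empty.mp h)]
    positivity
  · have : 0 < #(A ∪ B) := h.card_pos
    have h_U : (#U : ℝ) ≠ 0 := by exact_mod_cast (h.mono hU).card_ne_zero
    calc jaccardDist A B
        = 1 - #(A ∩ B) / #(A ∪ B) := jaccardDist_of_union_nonempty h
      _ ≤ 1 - #(A ∩ B) / #U := by gcongr
      _ = #(U \ (A ∩ B)) / #U := by
        rw [cast_card_sdiff (inter_subset_union.trans hU), sub_div, div_self h_U]

end JaccardDist

/-- **Triangle inequality for the Jaccard distance.**
For finite sets `A`, `B`, `C`, the Jaccard distance `d(A,B) = 1 - |A ∩ B|/|A ∪ B|`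
(the complement of the Jaccard similarity) satisfies `d(A,C) ≤ d(A,B) + d(B,C)`. -/
theorem jaccardDist_triangle {α : Type*} [DecidableEq α] (A B C : Finset α) :
    jaccardDist A C ≤ jaccardDist A B + jaccardDist B C := by
  set U := A ∪ B ∪ C
  have h_card : #(U \ (A ∩ C)) ≤ #(A ∆ B) + #(B ∆ C) :=
    (card_le_card (sup_sdiff_inf_le_symmDiff_sup_symmDiff A B C)).trans (card_union_le _ _)
  calc jaccardDist A C
      ≤ #(U \ (A ∩ C)) / #U := jaccardDist_le_card_sdiff_inter_div (by grind)
    _ ≤ (#(A ∆ B) + #(B ∆ C)) / #U := by gcongr; exact_mod_cast h_card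
    _ = #(A ∆ B) / #U + #(B ∆ C) / #U := add_div _ _ _
    _ ≤ jaccardDist A B + jaccardDist B C :=
      add_le_add (card_symmDiff_div_le_jaccardDist (by grind))
        (card_symmDiff_div_le_jaccardDist (by grind))
end

section
/- Let X be a finite type and φ : X → X → ℝ an element similarity measure with 0 ≤ φ(x,y) ≤ 1 for all x, y, φ(x,x) = 1 for all x, and such that ψ(x,y) = 1 − φ(x,y) satisfies the triangle inequality ψ(x,z) ≤ ψ(x,y) + ψ(y,z) for all x, y, z. Let R, S be finite subsets of X. Then there exists a maximum weight matching M between R and S (in the complete bipartite graph with edge weights φ) that matches every common element to itself: for each x ∈ R ∩ S, the pair (x, x) belongs to M. Hence the duplicate elements of R and S may be removed before matching and their count ov = |R ∩ S| added back to the matching weight without changing the optimum. -/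
open Finset

/-!
Let `x` be a common element of `R` and `S` that a matching does not pair with itself. Drop the pairs
`(a, x)` and `(x, b)` of the matching, as far as they exist, add `(x, x)`, and, if both existed, add
`(a, b)`. The triangle inequality for `1 - φ` says `φ a x + φ x b ≤ φ a b + 1`, so the weight does
not drop, and no other diagonal pair is touched. Apply this to a maximum weight matching, for one
common element after another.
-/

section Matching

variable {α β : Type*} {R : Finset α} {S : Finset β} {M : Finset (α × β)}

/-- `M` is a matching between `R` and `S` in the complete bipartite graph, encoded by its set of
edges as pairs in `R × S`. -/
def IsMatchingBetween (R : Finset α) (S : Finset β) (M : Finset (α × β)) : Prop :=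
  M ⊆ R ×ˢ S ∧ ∀ p ∈ M, ∀ q ∈ M, p ≠ q → p.1 ≠ q.1 ∧ p.2 ≠ q.2

theorem isMatchingBetween_empty (R : Finset α) (S : Finset β) : IsMatchingBetween R S ∅ :=
  ⟨empty_subset _, fun _ hp => absurd hp (notMem_empty _)⟩

theorem exists_isMatchingBetween_forall_sum_le {Γ : Type*} [AddCommMonoid Γ] [LinearOrder Γ]
    (w : α → β → Γ) (R : Finset α) (S : Finset β) :
    ∃ M, IsMatchingBetween R S M ∧
      ∀ M', IsMatchingBetween R S M' → ∑ p ∈ M', w p.1 p.2 ≤ ∑ p ∈ M, w p.1 p.2 := by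
  have hfin : {M | IsMatchingBetween R S M}.Finite :=
    (R ×ˢ S).powerset.finite_toSet.subset fun _ hM => mem_powerset.2 hM.1
  exact Set.exists_max_image _ (fun M => ∑ p ∈ M, w p.1 p.2) hfin ⟨∅, isMatchingBetween_empty R S⟩

namespace IsMatchingBetween

theorem fst_unique (hM : IsMatchingBetween R S M) {a a' : α} {b : β} (h : (a, b) ∈ M)
    (h' : (a', b) ∈ M) : a = a' := by
  by_contra hne
  exact (hM.2 _ h _ h' fun heq => hne (congrArg Prod.fst heq)).2 rfl

theorem snd_unique (hM : IsMatchingBetween R S M) {a : α} {b b' : β} (h : (a, b) ∈ M)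
    (h' : (a, b') ∈ M) : b = b' := by
  by_contra hne
  exact (hM.2 _ h _ h' fun heq => hne (congrArg Prod.snd heq)).1 rfl

theorem filter_fst_eq_empty_or_singleton [DecidableEq α] (hM : IsMatchingBetween R S M) (a : α) :
    {p ∈ M | p.1 = a} = ∅ ∨ ∃ b, {p ∈ M | p.1 = a} = {(a, b)} := by
  refine (eq_empty_or_nonempty _).imp_right ?_
  rintro ⟨⟨_, b⟩, hb⟩
  obtain ⟨hbM, rfl⟩ := mem_filter.1 hb
  refine ⟨b, eq_singleton_iff_unique_mem.2 ⟨hb, ?_⟩⟩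
  rintro ⟨_, b'⟩ hb'
  obtain ⟨hbM', rfl⟩ := mem_filter.1 hb'
  rw [hM.snd_unique hbM' hbM]

theorem filter_snd_eq_empty_or_singleton [DecidableEq β] (hM : IsMatchingBetween R S M) (b : β) :
    {p ∈ M | p.2 = b} = ∅ ∨ ∃ a, {p ∈ M | p.2 = b} = {(a, b)} := by
  refine (eq_empty_or_nonempty _).imp_right ?_
  rintro ⟨⟨a, _⟩, ha⟩
  obtain ⟨haM, rfl⟩ := mem_filter.1 ha
  refine ⟨a, eq_singleton_iff_unique_mem.2 ⟨ha, ?_⟩⟩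
  rintro ⟨a', _⟩ ha'
  obtain ⟨haM', rfl⟩ := mem_filter.1 ha'
  rw [hM.fst_unique haM' haM]

end IsMatchingBetween

end Matching

/-- The weight `w` makes it profitable to pair `x` with itself: the pair `(x, x)` is worth at least
as much as nothing and as any other pair at `x`, and exchanging `(a, x)` and `(x, b)` for `(x, x)`
and `(a, b)` loses nothing. -/
structure IsSelfDominant {X Γ : Type*} [AddCommMonoid Γ] [LE Γ] (w : X → X → Γ) (x : X) :
    Prop where
  nonneg : 0 ≤ w x x
  le_left : ∀ a, w a x ≤ w x x
  le_right : ∀ b, w x b ≤ w x x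
  exchange : ∀ a b, w a x + w x b ≤ w x x + w a b

theorem IsSelfDominant.of_one_sub_triangle {X 𝕜 : Type*} [CommRing 𝕜] [LinearOrder 𝕜]
    [IsStrictOrderedRing 𝕜] {φ : X → X → 𝕜} {x : X} (hle : ∀ y z, φ y z ≤ 1) (hself : φ x x = 1)
    (htri : ∀ a b, 1 - φ a b ≤ (1 - φ a x) + (1 - φ x b)) : IsSelfDominant φ x where
  nonneg := hself ▸ zero_le_one
  le_left a := hself ▸ hle a x
  le_right b := hself ▸ hle x b
  exchange a b := by linarith [htri a b]

section Rematch

variable {X : Type*} [DecidableEq X] {R S : Finset X} {M : Finset (X × X)} {x : X}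

/-- The modification of a matching `M` that pairs `x` with itself and, when `M` contains `(a, x)`
and `(x, b)`, pairs their freed endpoints `a` and `b`. The product below has at most one element
when `M` is a matching; writing it as a product avoids a case distinction on the partners of `x`. -/
def rematchSelf (M : Finset (X × X)) (x : X) : Finset (X × X) :=
  insert (x, x) ({p ∈ M | p.1 ≠ x ∧ p.2 ≠ x} ∪
    {p ∈ M | p.2 = x}.image Prod.fst ×ˢ {p ∈ M | p.1 = x}.image Prod.snd)

theorem mem_rematchSelf {a b : X} :
    (a, b) ∈ rematchSelf M x ↔
      (a = x ∧ b = x) ∨ ((a, b) ∈ M ∧ a ≠ x ∧ b ≠ x) ∨ ((a, x) ∈ M ∧ (x, b) ∈ M) := by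
  simp [rematchSelf]

theorem self_mem_rematchSelf (M : Finset (X × X)) (x : X) : (x, x) ∈ rematchSelf M x :=
  mem_insert_self _ _

theorem diag_mem_rematchSelf {y : X} (hy : (y, y) ∈ M) : (y, y) ∈ rematchSelf M x := by
  rw [mem_rematchSelf]
  tauto

theorem isMatchingBetween_rematchSelf (hM : IsMatchingBetween R S M) (hxR : x ∈ R)
    (hxS : x ∈ S) : IsMatchingBetween R S (rematchSelf M x) := by
  have hmem {a b : X} (h : (a, b) ∈ M) : a ∈ R ∧ b ∈ S := mem_product.1 (hM.1 h)
  constructor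
  · rintro ⟨a, b⟩ h
    rw [mem_product]
    rcases mem_rematchSelf.1 h with ⟨rfl, rfl⟩ | ⟨hab, -⟩ | ⟨hax, hxb⟩
    · exact ⟨hxR, hxS⟩
    · exact hmem hab
    · exact ⟨(hmem hax).1, (hmem hxb).2⟩
  · rintro ⟨a, b⟩ h ⟨c, d⟩ h'
    rw [mem_rematchSelf] at h h'
    grind [hM.fst_unique, hM.snd_unique]

theorem sum_eq_sum_filter_ne_add_sum_filter_eq {Γ : Type*} [AddCommMonoid Γ]
    (f : X × X → Γ) (hx : (x, x) ∉ M) :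
    ∑ p ∈ M, f p =
      ∑ p ∈ M with p.1 ≠ x ∧ p.2 ≠ x, f p +
        (∑ p ∈ M with p.2 = x, f p + ∑ p ∈ M with p.1 = x, f p) := by
  simp only [sum_filter, ← sum_add_distrib]
  refine sum_congr rfl ?_
  rintro ⟨a, b⟩ hab
  by_cases ha : a = x
  · have hb : b ≠ x := by
      rintro rfl
      exact hx (ha ▸ hab)
    simp [ha, hb]
  · by_cases hb : b = x <;> simp [ha, hb]

theorem sum_rematchSelf {Γ : Type*} [AddCommMonoid Γ] (f : X × X → Γ)
    (hM : IsMatchingBetween R S M) (hx : (x, x) ∉ M) :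
    ∑ p ∈ rematchSelf M x, f p =
      ∑ p ∈ M with p.1 ≠ x ∧ p.2 ≠ x, f p + (f (x, x) +
        ∑ p ∈ {p ∈ M | p.2 = x}.image Prod.fst ×ˢ {p ∈ M | p.1 = x}.image Prod.snd, f p) := by
  have hdisj : Disjoint {p ∈ M | p.1 ≠ x ∧ p.2 ≠ x}
      ({p ∈ M | p.2 = x}.image Prod.fst ×ˢ {p ∈ M | p.1 = x}.image Prod.snd) := by
    refine disjoint_left.2 ?_
    rintro ⟨a, b⟩ hU hP
    obtain ⟨hab, -, hb⟩ := mem_filter.1 hU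
    have hax : (a, x) ∈ M := by simpa using (mem_product.1 hP).1
    exact hb (hM.snd_unique hab hax)
  rw [rematchSelf, sum_insert (by simp [hx]), sum_union hdisj, add_left_comm]

theorem sum_le_sum_rematchSelf {Γ : Type*} [AddCommMonoid Γ] [PartialOrder Γ]
    [IsOrderedAddMonoid Γ] {w : X → X → Γ} (hM : IsMatchingBetween R S M)
    (hw : IsSelfDominant w x) (hx : (x, x) ∉ M) :
    ∑ p ∈ M, w p.1 p.2 ≤ ∑ p ∈ rematchSelf M x, w p.1 p.2 := by
  rw [sum_eq_sum_filter_ne_add_sum_filter_eq _ hx, sum_rematchSelf _ hM hx]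
  refine add_le_add le_rfl ?_
  rcases hM.filter_snd_eq_empty_or_singleton x with hcol | ⟨a, hcol⟩ <;>
    rcases hM.filter_fst_eq_empty_or_singleton x with hrow | ⟨b, hrow⟩
  · simpa [hcol, hrow] using hw.nonneg
  · simpa [hcol, hrow] using hw.le_right b
  · simpa [hcol, hrow] using hw.le_left a
  · simpa [hcol, hrow] using hw.exchange a b

end Rematch

namespace IsMatchingBetween

variable {X Γ : Type*} [DecidableEq X] [AddCommMonoid Γ] [PartialOrder Γ] [IsOrderedAddMonoid Γ]
  {w : X → X → Γ} {R S : Finset X} {M : Finset (X × X)}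

theorem exists_self_mem (hM : IsMatchingBetween R S M) {x : X} (hw : IsSelfDominant w x)
    (hx : x ∈ R ∩ S) :
    ∃ N, IsMatchingBetween R S N ∧ ∑ p ∈ M, w p.1 p.2 ≤ ∑ p ∈ N, w p.1 p.2 ∧
      (x, x) ∈ N ∧ ∀ y, (y, y) ∈ M → (y, y) ∈ N := by
  by_cases hxM : (x, x) ∈ M
  · exact ⟨M, hM, le_rfl, hxM, fun _ hy => hy⟩
  · obtain ⟨hxR, hxS⟩ := mem_inter.1 hx
    exact ⟨rematchSelf M x, isMatchingBetween_rematchSelf hM hxR hxS,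
      sum_le_sum_rematchSelf hM hw hxM, self_mem_rematchSelf M x, fun _ => diag_mem_rematchSelf⟩

theorem exists_forall_self_mem (hM : IsMatchingBetween R S M) {T : Finset X}
    (hw : ∀ x ∈ T, IsSelfDominant w x) (hT : T ⊆ R ∩ S) :
    ∃ N, IsMatchingBetween R S N ∧ ∑ p ∈ M, w p.1 p.2 ≤ ∑ p ∈ N, w p.1 p.2 ∧
      ∀ x ∈ T, (x, x) ∈ N := by
  induction T using Finset.induction_on with
  | empty => exact ⟨M, hM, le_rfl, fun _ hx => absurd hx (notMem_empty _)⟩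
  | insert x T _ ih =>
    obtain ⟨hx, hT⟩ := insert_subset_iff.1 hT
    obtain ⟨hwx, hwT⟩ := (forall_mem_insert ..).1 hw
    obtain ⟨N, hN, hMN, hdiag⟩ := ih hwT hT
    obtain ⟨N', hN', hNN', hxN', hkeep⟩ := hN.exists_self_mem hwx hx
    exact ⟨N', hN', hMN.trans hNN',
      (forall_mem_insert ..).2 ⟨hxN', fun y hy => hkeep y (hdiag y hy)⟩⟩

end IsMatchingBetween

theorem exists_max_matching_fixing_duplicates_general {X Γ : Type*} [DecidableEq X]
    [AddCommMonoid Γ] [LinearOrder Γ] [IsOrderedAddMonoid Γ] (w : X → X → Γ) (R S : Finset X)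
    (hw : ∀ x ∈ R ∩ S, IsSelfDominant w x) :
    ∃ M, IsMatchingBetween R S M ∧
      (∀ M', IsMatchingBetween R S M' → ∑ p ∈ M', w p.1 p.2 ≤ ∑ p ∈ M, w p.1 p.2) ∧
      ∀ x ∈ R ∩ S, (x, x) ∈ M := by
  obtain ⟨M, hM, hmax⟩ := exists_isMatchingBetween_forall_sum_le w R S
  obtain ⟨N, hN, hMN, hdiag⟩ := hM.exists_forall_self_mem hw subset_rfl
  exact ⟨N, hN, fun M' hM' => (hmax M' hM').trans hMN, hdiag⟩

/-- **Deduplication is safe for matching-based similarity.**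
If the element similarity `φ` takes values in `[0,1]`, satisfies `φ x x = 1`, and its
complement `ψ = 1 - φ` satisfies the triangle inequality, then there exists a maximum
weight matching between `R` and `S` (in the complete bipartite graph with edge weights
`φ`) that matches every common element of `R` and `S` to itself. -/
theorem exists_max_matching_fixing_duplicates
    {X : Type*} [Fintype X] [DecidableEq X]
    (φ : X → X → ℝ)
    (h01 : ∀ x y : X, 0 ≤ φ x y ∧ φ x y ≤ 1)
    (hrefl : ∀ x : X, φ x x = 1)
    (htri : ∀ x y z : X, 1 - φ x z ≤ (1 - φ x y) + (1 - φ y z))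
    (R S : Finset X) :
    ∃ M : Finset (X × X), M ⊆ R ×ˢ S ∧
      (∀ p ∈ M, ∀ q ∈ M, p ≠ q → p.1 ≠ q.1 ∧ p.2 ≠ q.2) ∧
      (∀ M' : Finset (X × X), M' ⊆ R ×ˢ S →
        (∀ p ∈ M', ∀ q ∈ M', p ≠ q → p.1 ≠ q.1 ∧ p.2 ≠ q.2) →
        ∑ p ∈ M', φ p.1 p.2 ≤ ∑ p ∈ M, φ p.1 p.2) ∧
      (∀ x ∈ R ∩ S, (x, x) ∈ M) := by
  simpa only [IsMatchingBetween, and_imp, and_assoc] using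
    exists_max_matching_fixing_duplicates_general φ R S fun x _ =>
      .of_one_sub_triangle (fun y z => (h01 y z).2) (hrefl x) fun a b => htri a x b
end
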